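/- arXiv:1710.10855 — 2 statements merged into one kernel-verified Lean document; each statement's English description precedes it below -/
import Mathlib

section
/- For every n ≥ 1 there exists a subgroup G of Homeo([0,1]) such that h(G,[0,1]) = n. Hence the set of possible heights P_h([0,1]) = {h(G,[0,1]) : G ≤ Homeo([0,1])} equals {1,2,3,...} ∪ {+∞}. -/
open Set Topology unitInterval

noncomputable section

/-- Group structure on self-homeomorphisms (composition). -/
instance homeoGroup {X : Type*} [TopologicalSpace X] : Group (X ≃ₜ X) where
  mul f g := g.trans f
  one := Homeomorph.refl X
  inv := Homeomorph.symm
  mul_assoc _ _ _ := Homeomorph.ext fun _ => rfl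
  one_mul _ := Homeomorph.ext fun _ => rfl
  mul_one _ := Homeomorph.ext fun _ => rfl
  inv_mul_cancel f := Homeomorph.ext fun x => f.symm_apply_apply x

/-- A set is invariant under a group of homeomorphisms. -/
def InvariantUnder {X : Type*} [TopologicalSpace X] (G : Subgroup (X ≃ₜ X)) (Y : Set X) : Prop :=
  ∀ g ∈ G, ∀ y ∈ Y, g y ∈ Y

/-- Lengths of strictly increasing chains of nonempty closed invariant sets ending at `univ`. -/
def heightSet {X : Type*} [TopologicalSpace X] (G : Subgroup (X ≃ₜ X)) : Set ℕ :=
  {n | ∃ Y : Fin (n + 1) → Set X,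
    StrictMono Y ∧ (∀ i, (Y i).Nonempty ∧ IsClosed (Y i) ∧ InvariantUnder G (Y i)) ∧
    Y (Fin.last n) = Set.univ}

/-- The height of a transformation group. -/
def height {X : Type*} [TopologicalSpace X] (G : Subgroup (X ≃ₜ X)) : ℕ∞ :=
  sSup ((fun n : ℕ => (n : ℕ∞)) '' heightSet G)

/-- The set of achievable heights on phase space `X`. -/
def PH (X : Type*) [TopologicalSpace X] : Set ℕ∞ :=
  {h | ∃ G : Subgroup (X ≃ₜ X), height G = h}

end

/-- The folded coordinate. -/
noncomputable def phS (n : ℕ) (x : ℝ) : ℝ := min (n * x) (n - n * x)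

/-- The colour (orbit label) of a point. -/
noncomputable def phC (n : ℕ) (x : ℝ) : ℤ := ⌊phS n x⌋ + ⌈phS n x⌉

/-- The group of colour preserving homeomorphisms. -/
def phG (n : ℕ) : Subgroup (I ≃ₜ I) where
  carrier := {g | ∀ x : I, phC n (g x) = phC n x}
  mul_mem' := by
    intro f g hf hg x
    exact (hf (g x)).trans (hg x)
  one_mem' := fun x => rfl
  inv_mem' := by
    intro f hf x
    have := hf (f.symm x)
    rw [f.apply_symm_apply] at this
    exact this.symm

theorem phC_cases (s : ℝ) : (s = ⌊s⌋ ∧ ⌈s⌉ = ⌊s⌋) ∨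
    ((⌊s⌋ : ℝ) < s ∧ s < ⌊s⌋ + 1 ∧ ⌈s⌉ = ⌊s⌋ + 1) := by
  rcases (Int.floor_le s).eq_or_lt with h | h
  · left
    refine ⟨h.symm, ?_⟩
    conv_lhs => rw [← h]
    simp
  · right
    refine ⟨h, Int.lt_floor_add_one s, ?_⟩
    rw [Int.ceil_eq_iff]
    push_cast
    exact ⟨by linarith, (Int.lt_floor_add_one s).le⟩

theorem phC_of_Ioo {s : ℝ} {k : ℤ} (h1 : (k : ℝ) < s) (h2 : s < k + 1) :
    ⌊s⌋ + ⌈s⌉ = 2 * k + 1 := by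
  have e1 : ⌊s⌋ = k := Int.floor_eq_iff.2 ⟨h1.le, h2⟩
  have e2 : ⌈s⌉ = k + 1 := by
    rw [Int.ceil_eq_iff]; push_cast; exact ⟨by linarith, h2.le⟩
  omega

theorem phC_le_iff (s : ℝ) (k : ℤ) : ⌊s⌋ + ⌈s⌉ ≤ 2 * k ↔ s ≤ k := by
  rw [← Int.ceil_le]
  rcases phC_cases s with h | h <;> omega

theorem phC_even_iff (s : ℝ) : Even (⌊s⌋ + ⌈s⌉) ↔ ∃ k : ℤ, (k : ℝ) = s := by
  constructor
  · intro he
    rcases phC_cases s with h | h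
    · exact ⟨_, h.1.symm⟩
    · rw [h.2.2] at he
      rcases he with ⟨r, hr⟩
      omega
  · rintro ⟨k, rfl⟩
    simp

theorem phS_cont (n : ℕ) : Continuous (fun x : I => phS n x) := by
  unfold phS; fun_prop

theorem phC_range (n : ℕ) (x : I) : 0 ≤ phC n x ∧ phC n x ≤ n := by
  have h0 : 0 ≤ phS n x := by
    have := x.2.1
    have := x.2.2
    have hn : (0:ℝ) ≤ n := by positivity
    unfold phS
    apply le_min
    · positivity
    · nlinarith
  have h1 : 2 * phS n x ≤ n := by
    have := min_le_left (n * (x:ℝ)) (n - n * x)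
    have := min_le_right (n * (x:ℝ)) (n - n * x)
    unfold phS; linarith
  unfold phC
  have f0 : 0 ≤ ⌊phS n x⌋ := Int.floor_nonneg.2 h0
  rcases phC_cases (phS n x) with h | h
  · refine ⟨by omega, ?_⟩
    rw [h.2]
    rw [h.1] at h1
    have : 2 * ⌊phS n x⌋ ≤ (n:ℤ) := by exact_mod_cast h1
    omega
  · refine ⟨by omega, ?_⟩
    have : 2 * ⌊phS n x⌋ < (n:ℤ) := by
      have : (2:ℝ) * ⌊phS n x⌋ < n := by linarith
      exact_mod_cast this
    omega

theorem phS_symm (n : ℕ) (x : ℝ) : phS n (1 - x) = phS n x := by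
  unfold phS
  rw [min_comm]
  congr 1 <;> ring

/-- Pushing a point upwards inside an interval. -/
theorem exists_push (a b x y : ℝ) (ha : 0 ≤ a) (hb : b ≤ 1) (hax : a < x) (hxy : x ≤ y)
    (hyb : y < b) : ∃ g : I ≃ₜ I, (∀ z : I, (z : ℝ) = x → (g z : ℝ) = y) ∧
      (∀ z : I, (z : ℝ) ≤ a ∨ b ≤ (z : ℝ) → g z = z) ∧
      (∀ z : I, a < (z : ℝ) → (z : ℝ) < b → a < (g z : ℝ) ∧ (g z : ℝ) < b) := by
  obtain ⟨p, hp⟩ : ∃ p, p = (y - a) / (x - a) := ⟨_, rfl⟩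
  obtain ⟨q, hq⟩ : ∃ q, q = (b - y) / (b - x) := ⟨_, rfl⟩
  have hp' : p * (x - a) = y - a := by
    rw [hp]; exact div_mul_cancel₀ _ (by linarith)
  have hq' : q * (b - x) = b - y := by
    rw [hq]; exact div_mul_cancel₀ _ (by linarith)
  have hp1 : 1 ≤ p := by rw [hp, one_le_div (by linarith)]; linarith
  have hq1 : q ≤ 1 := by rw [hq, div_le_one (by linarith)]; linarith
  have hq0 : 0 < q := by rw [hq]; exact div_pos (by linarith) (by linarith)
  let F : ℝ → ℝ := fun z => max z (min (a + p * (z - a)) (b - q * (b - z)))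
  have hF : ∀ z, F z = max z (min (a + p * (z - a)) (b - q * (b - z))) := fun _ => rfl
  have hFc : Continuous F := by fun_prop
  have hFm : StrictMono F := by
    intro u v huv
    rw [hF, hF]
    apply max_lt_max huv
    apply min_lt_min
    · nlinarith
    · nlinarith
  have hFout : ∀ z, z ≤ a ∨ b ≤ z → F z = z := by
    intro z hz
    rw [hF]
    apply max_eq_left
    rcases hz with hz | hz
    · exact (min_le_left _ _).trans (by nlinarith)
    · exact (min_le_right _ _).trans (by nlinarith)
  have hFx : F x = y := by
    rw [hF, hp', hq', add_sub_cancel, sub_sub_cancel, min_self, max_eq_right hxy]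
  have hF0 : F 0 = 0 := hFout 0 (Or.inl ha)
  have hF1 : F 1 = 1 := hFout 1 (Or.inr hb)
  have hFI : ∀ z : I, F z ∈ Icc (0:ℝ) 1 := fun z =>
    ⟨by rw [← hF0]; exact hFm.monotone z.2.1, by rw [← hF1]; exact hFm.monotone z.2.2⟩
  let f : I → I := fun z => ⟨F z, hFI z⟩
  have hfm : StrictMono f := fun u v huv => hFm huv
  have hfs : Function.Surjective f := by
    intro w
    have := intermediate_value_Icc (zero_le_one (α := ℝ)) hFc.continuousOn
    rw [hF0, hF1] at this
    obtain ⟨z, hz, hzw⟩ := this w.2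
    exact ⟨⟨z, hz⟩, Subtype.ext hzw⟩
  refine ⟨(StrictMono.orderIsoOfSurjective f hfm hfs).toHomeomorph, ?_, ?_, ?_⟩
  · intro z hz
    change F z = y
    rw [hz, hFx]
  · intro z hz
    exact Subtype.ext (hFout z hz)
  · intro z h1 h2
    change a < F z ∧ F z < b
    constructor
    · rw [← hFout a (Or.inl le_rfl)]; exact hFm h1
    · rw [← hFout b (Or.inr le_rfl)]; exact hFm h2

theorem phC_Ioo (n : ℕ) (k : ℤ) (hk : 2 * k < n) (z : ℝ) (h1 : k < n * z)
    (h2 : n * z < k + 1) : phC n z = 2 * k + 1 := by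
  unfold phC
  have hk' : (2 * k + 1 : ℝ) ≤ n := by
    have : 2 * k + 1 ≤ (n:ℤ) := by omega
    exact_mod_cast this
  apply phC_of_Ioo
  · unfold phS
    apply lt_min h1
    rcases eq_or_lt_of_le (show 2 * k + 1 ≤ (n:ℤ) by omega) with h | h
    · have : (2 * k + 1 : ℝ) = n := by exact_mod_cast h
      linarith
    · have : (2 * k + 2 : ℝ) ≤ n := by
        have : 2 * k + 2 ≤ (n:ℤ) := by omega
        exact_mod_cast this
      linarith
  · exact (min_le_left _ _).trans_lt h2

/-- Transitivity on colour classes, same half. -/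
theorem ph_trans_half (n : ℕ) (hn : 1 ≤ n) (x y : I) (hx : phS n x = n * x)
    (hy : phS n y = n * y) (hxy : x ≤ y) (h : phC n x = phC n y) :
    ∃ g ∈ phG n, g x = y := by
  have hn0 : (0:ℝ) < n := by exact_mod_cast hn
  have h' := h
  unfold phC at h
  have hxle : 2 * phS n x ≤ n := by
    have := min_le_right (n * (x:ℝ)) (n - n * x)
    have : phS n x ≤ n - n * x := this
    linarith
  rcases phC_cases (phS n x) with ⟨a1, a2⟩ | ⟨a1, a2, a3⟩ <;>
  rcases phC_cases (phS n y) with b | b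
  · have : phS n x = phS n y := by
      rw [a1, b.1]
      have : ⌊phS n x⌋ = ⌊phS n y⌋ := by omega
      exact_mod_cast this
    rw [hx, hy] at this
    refine ⟨1, one_mem _, ?_⟩
    exact Subtype.ext (mul_left_cancel₀ hn0.ne' this)
  · omega
  · omega
  · obtain ⟨b1, b2, b3⟩ := b
    obtain ⟨k, hk⟩ : ∃ k, k = ⌊phS n x⌋ := ⟨_, rfl⟩
    have hk2 : ⌊phS n y⌋ = k := by omega
    rw [← hk] at a1 a2
    rw [hk2] at b1 b2
    have hkn : 2 * k < (n:ℤ) := by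
      have : (2:ℝ) * k < n := by linarith
      exact_mod_cast this
    have hkn' : ((k:ℝ) + 1) ≤ n := by
      have : k + 1 ≤ (n:ℤ) := by
        have : 0 ≤ k := by
          rw [hk, Int.floor_nonneg, hx]
          exact mul_nonneg hn0.le x.2.1
        omega
      exact_mod_cast this
    have hk0 : (0:ℝ) ≤ k := by
      have : 0 ≤ k := by
        rw [hk, Int.floor_nonneg, hx]
        exact mul_nonneg hn0.le x.2.1
      exact_mod_cast this
    obtain ⟨g, g1, g2, g3⟩ := exists_push (k / n) ((k + 1) / n) x y (by positivity)
      (by rw [div_le_one hn0]; exact hkn')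
      (by rw [div_lt_iff₀ hn0]; linarith) hxy (by rw [lt_div_iff₀ hn0]; linarith)
    refine ⟨g, ?_, Subtype.ext (g1 x rfl)⟩
    intro z
    by_cases hz : (k / n : ℝ) < z ∧ (z:ℝ) < (k + 1) / n
    · have hgz := g3 z hz.1 hz.2
      rw [div_lt_iff₀ hn0, lt_div_iff₀ hn0] at hz hgz
      rw [phC_Ioo n k hkn z (by linarith) (by linarith),
        phC_Ioo n k hkn (g z) (by linarith) (by linarith)]
    · rw [g2 z]
      by_contra hcon
      push Not at hcon
      exact hz hcon

theorem ph_trans_half' (n : ℕ) (hn : 1 ≤ n) (x y : I) (hx : phS n x = n * x)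
    (hy : phS n y = n * y) (h : phC n x = phC n y) :
    ∃ g ∈ phG n, g x = y := by
  rcases le_total x y with hxy | hxy
  · exact ph_trans_half n hn x y hx hy hxy h
  · obtain ⟨g, hg, e⟩ := ph_trans_half n hn y x hy hx hxy h.symm
    refine ⟨g⁻¹, inv_mem hg, ?_⟩
    rw [← e]
    exact g.symm_apply_apply y

theorem ph_flip (n : ℕ) : ∃ g ∈ phG n, ∀ x : I, ((g x : I) : ℝ) = 1 - x := by
  refine ⟨⟨⟨σ, σ, unitInterval.symm_symm, unitInterval.symm_symm⟩,
    unitInterval.continuous_symm, unitInterval.continuous_symm⟩, ?_, fun x => rfl⟩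
  intro x
  change phC n (1 - x) = phC n x
  unfold phC
  rw [phS_symm]

theorem ph_half (n : ℕ) (x : I) : ∃ g ∈ phG n, phS n (g x) = n * (g x : I) := by
  rcases le_total (n * (x:ℝ)) (n - n * x) with h | h
  · exact ⟨1, one_mem _, min_eq_left h⟩
  · obtain ⟨g, hg, e⟩ := ph_flip n
    refine ⟨g, hg, ?_⟩
    rw [e]
    apply min_eq_left
    linarith

theorem ph_trans (n : ℕ) (hn : 1 ≤ n) (x y : I) (h : phC n x = phC n y) :
    ∃ g ∈ phG n, g x = y := by
  obtain ⟨g1, m1, e1⟩ := ph_half n x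
  obtain ⟨g2, m2, e2⟩ := ph_half n y
  obtain ⟨g, m, e⟩ := ph_trans_half' n hn (g1 x) (g2 y) e1 e2
    (by rw [m1 x, m2 y, h])
  refine ⟨g2⁻¹ * (g * g1), mul_mem (inv_mem m2) (mul_mem m m1), ?_⟩
  change g2.symm (g (g1 x)) = y
  rw [e]
  exact g2.symm_apply_apply y

theorem ph_upper (n : ℕ) (hn : 1 ≤ n) (m : ℕ) (hm : m ∈ heightSet (phG n)) : m ≤ n := by
  classical
  obtain ⟨Y, hY, hinv, -⟩ := hm
  let c : Fin (m + 1) → Finset ℤ := fun i =>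
    (Finset.Icc (0:ℤ) n).filter (fun k => ∃ x ∈ Y i, phC n x = k)
  have hc : StrictMono c := by
    intro i j hij
    have hlt := hY hij
    rw [Finset.ssubset_iff_of_subset]
    · obtain ⟨y, hy, hyn⟩ := Set.exists_of_ssubset hlt
      refine ⟨phC n y, ?_, ?_⟩
      · simp only [c, Finset.mem_filter, Finset.mem_Icc]
        exact ⟨phC_range n y, y, hy, rfl⟩
      · simp only [c, Finset.mem_filter, not_and]
        rintro - ⟨x, hx, e⟩
        obtain ⟨g, hg, rfl⟩ := ph_trans n hn x y e
        exact hyn ((hinv i).2.2 g hg x hx)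
    · intro k hk
      simp only [c, Finset.mem_filter] at hk ⊢
      obtain ⟨h1, x, hx, e⟩ := hk
      exact ⟨h1, x, hlt.le hx, e⟩
  have hcard : StrictMono (fun i => (c i).card) := fun i j h => Finset.card_lt_card (hc h)
  have key : ∀ k : ℕ, ∀ hk : k < m + 1, k + 1 ≤ (c ⟨k, hk⟩).card := by
    intro k
    induction k with
    | zero =>
      intro hk
      obtain ⟨x, hx⟩ := (hinv ⟨0, hk⟩).1
      apply Nat.succ_le_of_lt
      apply Finset.card_pos.2
      refine ⟨phC n x, ?_⟩
      simp only [c, Finset.mem_filter, Finset.mem_Icc]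
      exact ⟨phC_range n x, x, hx, rfl⟩
    | succ k ih =>
      intro hk
      have h1 := ih (by omega)
      have h2 : (c ⟨k, by omega⟩).card < (c ⟨k + 1, hk⟩).card :=
        hcard (Fin.mk_lt_mk.2 (Nat.lt_succ_self k))
      omega
  have h1 := key m (by omega)
  have h2 : (c ⟨m, by omega⟩).card ≤ (Finset.Icc (0:ℤ) n).card :=
    Finset.card_le_card (Finset.filter_subset _ _)
  rw [Int.card_Icc] at h2
  omega

theorem ph_lower (n : ℕ) (hn : 1 ≤ n) : n ∈ heightSet (phG n) := by
  have hn0 : (0:ℝ) < n := by exact_mod_cast hn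
  have wit : ∀ s : ℝ, 0 ≤ s → 2 * s ≤ n → ∃ x : I, phS n x = s := by
    intro s h0 h1
    refine ⟨⟨s / n, by positivity, by rw [div_le_one hn0]; linarith⟩, ?_⟩
    unfold phS
    change min (n * (s / n)) (n - n * (s / n)) = s
    rw [mul_div_cancel₀ _ hn0.ne']
    exact min_eq_left (by linarith)
  let Y : Fin (n + 1) → Set I := fun j =>
    {x | (Even (phC n x) ∧ phC n x ≤ 2 * ((j : ℕ) : ℤ)) ∨ phC n x ≤ 2 * (((j:ℕ):ℤ) - (n / 2 : ℕ))}
  refine ⟨Y, ?_, ?_, ?_⟩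
  · rw [Fin.strictMono_iff_lt_succ]
    intro j
    have hj := j.2
    rw [Set.ssubset_iff_of_subset]
    · by_cases hjn : (j:ℕ) + 1 ≤ n / 2
      · obtain ⟨x, hx⟩ := wit (((j:ℕ):ℤ) + 1 : ℤ) (by positivity)
          (by have : 2 * ((j:ℕ) + 1) ≤ n := by omega
              exact_mod_cast this)
        have hcx : phC n x = 2 * (((j:ℕ):ℤ) + 1) := by
          unfold phC
          rw [hx, Int.floor_intCast, Int.ceil_intCast]; ring
        refine ⟨x, Or.inl ⟨?_, ?_⟩, ?_⟩
        · rw [hcx]; simp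
        · rw [hcx]; simp
        · change ¬ (_ ∨ _)
          rw [hcx]
          simp only [Fin.val_castSucc]
          omega
      · obtain ⟨d, hd⟩ : ∃ d : ℕ, (j:ℕ) = n / 2 + d := ⟨j - n / 2, by omega⟩
        obtain ⟨x, hx⟩ := wit (d + 1 / 2) (by positivity)
          (by have : 2 * d + 1 ≤ n := by omega
              have : (2 * d + 1 : ℝ) ≤ n := by exact_mod_cast this
              linarith)
        have hcx : phC n x = 2 * (d:ℤ) + 1 := by
          unfold phC
          rw [hx]
          apply phC_of_Ioo <;> push_cast <;> linarith
        refine ⟨x, Or.inr ?_, ?_⟩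
        · rw [hcx]; simp only [Fin.val_succ]; omega
        · change ¬ (_ ∨ _)
          rw [hcx]
          simp only [Fin.val_castSucc]
          rintro (⟨⟨r, hr⟩, -⟩ | h) <;> omega
    · rintro x (⟨h1, h2⟩ | h)
      · refine Or.inl ⟨h1, ?_⟩
        simp only [Fin.val_castSucc, Fin.val_succ] at h2 ⊢
        omega
      · refine Or.inr ?_
        simp only [Fin.val_castSucc, Fin.val_succ] at h ⊢
        omega
  · intro j
    refine ⟨?_, ?_, ?_⟩
    · obtain ⟨x, hx⟩ := wit 0 le_rfl (by linarith)
      refine ⟨x, Or.inl ?_⟩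
      unfold phC
      rw [hx]
      simp
    · have : Y j = (fun x : I => phS n x) ⁻¹' ((Set.range ((↑) : ℤ → ℝ) ∩ Iic (((j:ℕ):ℤ):ℝ)) ∪
          Iic ((((j:ℕ):ℤ) - (n / 2 : ℕ) : ℤ) : ℝ)) := by
        ext x
        change (_ ∨ _) ↔ (_ ∨ _)
        unfold phC
        rw [phC_even_iff, phC_le_iff, phC_le_iff]
        rfl
      rw [this]
      apply IsClosed.preimage (phS_cont n)
      exact (Int.isClosedEmbedding_coe_real.isClosed_range.inter isClosed_Iic).union isClosed_Iic
    · intro g hg y hy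
      change (_ ∨ _)
      rw [hg y]
      exact hy
  · rw [Set.eq_univ_iff_forall]
    intro x
    refine Or.inr ?_
    have := phC_range n x
    simp only [Fin.val_last]
    omega

theorem ph_height (n : ℕ) (hn : 1 ≤ n) : height (phG n) = (n : ℕ∞) := by
  apply le_antisymm
  · apply sSup_le
    rintro _ ⟨m, hm, rfl⟩
    exact Nat.cast_le.2 (ph_upper n hn m hm)
  · exact le_sSup ⟨n, ph_lower n hn, rfl⟩

theorem ph_anti {G H : Subgroup (I ≃ₜ I)} (h : G ≤ H) : height H ≤ height G := by
  apply sSup_le_sSup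
  apply Set.image_mono
  rintro m ⟨Y, h1, h2, h3⟩
  exact ⟨Y, h1, fun i => ⟨(h2 i).1, (h2 i).2.1, fun g hg => (h2 i).2.2 g (h hg)⟩, h3⟩

theorem ph_ends (g : I ≃ₜ I) (y : I) (hy : y = 0 ∨ y = 1) : g y = 0 ∨ g y = 1 := by
  rcases g.continuous.strictMono_of_inj g.injective with h | h
  · rcases hy with rfl | rfl
    · left
      apply le_antisymm _ unitInterval.nonneg'
      conv_rhs => rw [← g.apply_symm_apply 0]
      exact h.monotone unitInterval.nonneg'
    · right
      apply le_antisymm unitInterval.le_one'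
      conv_lhs => rw [← g.apply_symm_apply 1]
      exact h.monotone unitInterval.le_one'
  · rcases hy with rfl | rfl
    · right
      apply le_antisymm unitInterval.le_one'
      conv_lhs => rw [← g.apply_symm_apply 1]
      exact h.antitone unitInterval.nonneg'
    · left
      apply le_antisymm _ unitInterval.nonneg'
      conv_rhs => rw [← g.apply_symm_apply 0]
      exact h.antitone unitInterval.le_one'

theorem ph_one_le (G : Subgroup (I ≃ₜ I)) : 1 ≤ height G := by
  have hle : G ≤ phG 1 := by
    intro g _ x
    have key : ∀ z : I, phC 1 z = if z = 0 ∨ z = 1 then 0 else 1 := by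
      intro z
      split_ifs with hz
      · rcases hz with rfl | rfl <;> simp [phC, phS]
      · push Not at hz
        have h0 : (0:ℝ) < z := unitInterval.pos_iff_ne_zero.2 hz.1
        have h1 : (z:ℝ) < 1 := unitInterval.lt_one_iff_ne_one.2 hz.2
        simpa using phC_Ioo 1 0 (by norm_num) z (by simpa using h0) (by simpa using h1)
    rw [key, key]
    have : (g x = 0 ∨ g x = 1) ↔ (x = 0 ∨ x = 1) := by
      constructor
      · intro h
        have := ph_ends g.symm _ h
        rwa [g.symm_apply_apply] at this
      · exact ph_ends g x
    simp only [this]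
  have := ph_anti hle
  rw [ph_height 1 le_rfl] at this
  exact_mod_cast this

/-- Every `n ≥ 1` is realized as a height on `[0,1]`, and
`P_h([0,1]) = {1, 2, 3, …} ∪ {+∞}`. -/
theorem PH_unitInterval :
    (∀ n : ℕ, 1 ≤ n → ∃ G : Subgroup (I ≃ₜ I), height G = (n : ℕ∞)) ∧
    PH I = {h : ℕ∞ | 1 ≤ h} := by
  refine ⟨fun n hn => ⟨phG n, ph_height n hn⟩, ?_⟩
  ext h
  constructor
  · rintro ⟨G, rfl⟩
    exact ph_one_le G
  · intro hh
    rcases eq_or_ne h ⊤ with rfl | ht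
    · refine ⟨⊥, ?_⟩
      rw [ENat.eq_top_iff_forall_ge]
      intro m
      have h1 := ph_anti (bot_le : (⊥ : Subgroup (I ≃ₜ I)) ≤ phG (m + 1))
      rw [ph_height (m + 1) (by omega)] at h1
      refine le_trans ?_ h1
      exact_mod_cast Nat.le_succ m
    · lift h to ℕ using ht
      exact ⟨phG h, ph_height h (by exact_mod_cast (show (1:ℕ∞) ≤ h from hh))⟩
end

section
/- The set of possible heights for the circle is P_h(S¹) = {0,1,2,3,...} ∪ {+∞}: for every n ≥ 0 there is a subgroup H of Homeo(S¹) with h(H,S¹) = n, and there is one with infinite height. -/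
open Set Topology unitInterval

theorem height_eq_of_rank {X : Type*} [TopologicalSpace X] (G : Subgroup (X ≃ₜ X)) (k : ℕ)
    (R : X → ℕ) (hlt : ∀ x, R x ≤ k) (hsurj : ∀ i ≤ k, ∃ x, R x = i)
    (hcl : ∀ i, IsClosed {x | R x ≤ i}) (hinv : ∀ g ∈ G, ∀ x, R (g x) = R x)
    (htr : ∀ x y, R x = R y → ∃ g ∈ G, g x = y) : height G = (k : ℕ∞) := by
  apply le_antisymm
  · apply sSup_le
    rintro _ ⟨n, ⟨Y, hY, hp, -⟩, rfl⟩
    have hsat : ∀ i x y, x ∈ Y i → R x = R y → y ∈ Y i := by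
      intro i x y hx hxy
      obtain ⟨g, hg, rfl⟩ := htr x y hxy
      exact (hp i).2.2 g hg x hx
    let S : Fin (n + 1) → Finset ℕ := fun i =>
      (Set.Finite.subset (Set.finite_Iic k)
        (show R '' Y i ⊆ Set.Iic k by rintro _ ⟨x, -, rfl⟩; exact hlt x)).toFinset
    have hS : ∀ i m, m ∈ S i ↔ ∃ x ∈ Y i, R x = m := by
      intro i m; simp [S]
    have hSk : ∀ i, S i ⊆ Finset.range (k + 1) := by
      intro i m hm
      obtain ⟨x, -, rfl⟩ := (hS i m).1 hm
      have := hlt x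
      simp; omega
    have hmono : StrictMono S := by
      intro i j hij
      have h := hY hij
      refine Finset.ssubset_iff_subset_ne.2 ⟨?_, ?_⟩
      · intro m hm
        obtain ⟨x, hx, rfl⟩ := (hS i m).1 hm
        exact (hS j _).2 ⟨x, h.1 hx, rfl⟩
      · intro he
        apply h.2
        intro y hy
        have : R y ∈ S i := by rw [he]; exact (hS j _).2 ⟨y, hy, rfl⟩
        obtain ⟨x, hx, hxy⟩ := (hS i _).1 this
        exact hsat i x y hx hxy
    have hcard : ∀ m (hm : m < n + 1), m + 1 ≤ (S ⟨m, hm⟩).card := by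
      intro m
      induction m with
      | zero =>
        intro hm
        obtain ⟨x, hx⟩ := (hp ⟨0, hm⟩).1
        exact Finset.card_pos.2 ⟨R x, (hS _ _).2 ⟨x, hx, rfl⟩⟩
      | succ m ih =>
        intro hm
        have h1 := ih (by omega)
        have h2 := Finset.card_lt_card (hmono (show (⟨m, by omega⟩ : Fin (n+1)) < ⟨m+1, hm⟩ by
          simp [Fin.lt_def]))
        omega
    have h1 := hcard n (by omega)
    have h2 := Finset.card_le_card (hSk ⟨n, by omega⟩)
    rw [Finset.card_range] at h2
    have : n ≤ k := by omega
    exact Nat.cast_le.2 this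
  · apply le_sSup
    refine ⟨k, ⟨fun i => {x | R x ≤ i}, ?_, ?_, ?_⟩, rfl⟩
    · intro i j hij
      have hij' : (i : ℕ) < j := hij
      refine ⟨fun x hx => ?_, fun h => ?_⟩
      · have : R x ≤ i := hx
        show R x ≤ j
        omega
      · obtain ⟨x, hx⟩ := hsurj j (by omega)
        have : R x ≤ i := h (show R x ≤ j by omega)
        omega
    · intro i
      refine ⟨?_, hcl i, ?_⟩
      · obtain ⟨x, hx⟩ := hsurj 0 (by omega)
        exact ⟨x, show R x ≤ i by omega⟩
      · intro g hg y hy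
        show R (g y) ≤ i
        rw [hinv g hg]; exact hy
    · ext x; simpa using hlt x

theorem height_bot_eq_top {X : Type*} [TopologicalSpace X] [T1Space X] [Infinite X] :
    height (⊥ : Subgroup (X ≃ₜ X)) = ⊤ := by
  have key : ∀ n : ℕ, n ∈ heightSet (⊥ : Subgroup (X ≃ₜ X)) := by
    intro n
    let e := Infinite.natEmbedding X
    let Z : ℕ → Set X := fun i => e '' Set.Iic i
    have hinv : ∀ Y : Set X, InvariantUnder (⊥ : Subgroup (X ≃ₜ X)) Y := by
      intro Y g hg y hy
      rw [Subgroup.mem_bot] at hg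
      subst hg; exact hy
    refine ⟨fun i => if (i : ℕ) = n then Set.univ else Z i, ?_, ?_, ?_⟩
    · intro i j hij
      have hij' : (i : ℕ) < j := hij
      have hi : (i : ℕ) ≠ n := by omega
      simp only [hi, if_false]
      have hn : e (j : ℕ) ∉ Z i := by
        rintro ⟨m, hm, hme⟩
        have := e.injective hme
        have hm : m ≤ i := hm
        omega
      split_ifs with hj
      · exact ⟨Set.subset_univ _, fun h => hn (h (Set.mem_univ _))⟩
      · refine ⟨Set.image_mono (Set.Iic_subset_Iic.2 hij'.le), fun h => hn (h ⟨j, ?_, rfl⟩)⟩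
        exact le_refl (j : ℕ)
    · intro i
      refine ⟨?_, ?_, hinv _⟩
      · dsimp only; split_ifs
        · exact ⟨e 0, Set.mem_univ _⟩
        · exact ⟨e 0, 0, Nat.zero_le _, rfl⟩
      · dsimp only; split_ifs
        · exact isClosed_univ
        · exact ((Set.finite_Iic _).image _).isClosed
    · simp
  rw [ENat.eq_top_iff_forall_ge]
  intro m
  exact le_sSup ⟨m, key m, rfl⟩

/-- Periodic rank functions on the line, with rank-preserving periodic order isomorphisms
acting transitively on fibers. -/
def Good (k : ℕ) : Prop :=
  ∃ r : ℝ → ℕ, (∀ x, r x ≤ k) ∧ (∀ i ≤ k, ∃ x, r x = i) ∧ (∀ i, IsClosed {x | r x ≤ i}) ∧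
    (∀ x, r (x + 1) = r x) ∧
    (∀ x y, r x = r y → ∃ g : ℝ ≃o ℝ, (∀ z, g (z + 1) = g z + 1) ∧ (∀ z, r (g z) = r z) ∧ g x = y)

theorem good_zero : Good 0 := by
  refine ⟨fun _ => 0, by simp, fun i hi => ⟨0, (Nat.le_zero.1 hi).symm⟩, by simp, by simp, ?_⟩
  intro x y _
  refine ⟨OrderIso.addRight (y - x), ?_, by simp, by simp⟩
  intro z; simp; ring

theorem exists_orderIso : Nonempty (ℝ ≃o Set.Ioo (0:ℝ) 1) := by
  refine ⟨(orderIsoIooNegOneOne ℝ).trans ?_⟩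
  refine
    { toFun := fun x => ⟨(x.1 + 1) / 2, by have := x.2.1; have := x.2.2; constructor <;> linarith⟩
      invFun := fun x => ⟨2 * x.1 - 1, by have := x.2.1; have := x.2.2; constructor <;> linarith⟩
      left_inv := fun x => by ext; simp; ring
      right_inv := fun x => by ext; simp
      map_rel_iff' := ?_ }
  intro a b
  rw [← Subtype.coe_le_coe, ← Subtype.coe_le_coe]
  simp only [Equiv.coe_fn_mk]
  constructor <;> intro h <;> linarith

/-- Conjugate `g` into `(0,1)` and extend periodically. -/
noncomputable def ext1 (φ : ℝ ≃o Set.Ioo (0:ℝ) 1) (g : ℝ ≃o ℝ) (x : ℝ) : ℝ :=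
  if h : 0 < Int.fract x then ⌊x⌋ + (φ (g (φ.symm ⟨Int.fract x, h, Int.fract_lt_one x⟩)) : ℝ)
  else x

theorem ext1_int (φ : ℝ ≃o Set.Ioo (0:ℝ) 1) (g : ℝ ≃o ℝ) (n : ℤ) : ext1 φ g n = n := by
  simp [ext1]

theorem fract_aux (n : ℤ) (t : Set.Ioo (0:ℝ) 1) : Int.fract ((n : ℝ) + t) = t := by
  rw [Int.fract_intCast_add]; exact Int.fract_eq_self.2 ⟨t.2.1.le, t.2.2⟩

theorem floor_aux (n : ℤ) (t : Set.Ioo (0:ℝ) 1) : ⌊(n : ℝ) + t⌋ = n := by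
  rw [Int.floor_intCast_add, Int.floor_eq_zero_iff.2 ⟨t.2.1.le, t.2.2⟩, add_zero]

theorem ext1_add (φ : ℝ ≃o Set.Ioo (0:ℝ) 1) (g : ℝ ≃o ℝ) (n : ℤ) (u : ℝ) :
    ext1 φ g (n + φ u) = n + φ (g u) := by
  have h : 0 < Int.fract ((n : ℝ) + φ u) := by rw [fract_aux]; exact (φ u).2.1
  have h2 : (⟨Int.fract ((n : ℝ) + φ u), h, Int.fract_lt_one _⟩ : Set.Ioo (0:ℝ) 1) = φ u :=
    Subtype.ext (fract_aux n _)
  rw [ext1, dif_pos h, h2, floor_aux, OrderIso.symm_apply_apply]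

theorem real_cases (φ : ℝ ≃o Set.Ioo (0:ℝ) 1) (x : ℝ) :
    (∃ n : ℤ, x = n) ∨ ∃ (n : ℤ) (u : ℝ), x = n + φ u := by
  rcases (Int.fract_nonneg x).eq_or_lt with h | h
  · left; refine ⟨⌊x⌋, ?_⟩
    have := Int.floor_add_fract x
    linarith
  · right
    refine ⟨⌊x⌋, φ.symm ⟨Int.fract x, h, Int.fract_lt_one x⟩, ?_⟩
    simp

theorem ext1_inv (φ : ℝ ≃o Set.Ioo (0:ℝ) 1) (g : ℝ ≃o ℝ) (x : ℝ) :
    ext1 φ g.symm (ext1 φ g x) = x := by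
  rcases real_cases φ x with ⟨n, rfl⟩ | ⟨n, u, rfl⟩
  · simp only [ext1_int]
  · simp only [ext1_add, OrderIso.symm_apply_apply]

theorem ext1_mono (φ : ℝ ≃o Set.Ioo (0:ℝ) 1) (g : ℝ ≃o ℝ) : StrictMono (ext1 φ g) := by
  intro x y hxy
  rcases real_cases φ x with ⟨n, rfl⟩ | ⟨n, u, rfl⟩ <;>
  rcases real_cases φ y with ⟨m, rfl⟩ | ⟨m, v, rfl⟩
  · simpa only [ext1_int] using hxy
  · simp only [ext1_int, ext1_add]
    have h1 := (φ v).2; have h2 := (φ (g v)).2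
    have : n < m + 1 := by
      have : (n : ℝ) < m + 1 := by linarith [h1.2]
      exact_mod_cast this
    have : (n : ℝ) ≤ m := by exact_mod_cast (by omega : n ≤ m)
    linarith [h2.1]
  · simp only [ext1_int, ext1_add]
    have h1 := (φ u).2; have h2 := (φ (g u)).2
    have : n < m := by
      have : (n : ℝ) < m := by linarith [h1.1]
      exact_mod_cast this
    have : (n : ℝ) + 1 ≤ m := by exact_mod_cast (by omega : n + 1 ≤ m)
    linarith [h2.2]
  · simp only [ext1_add]
    have h1 := (φ u).2; have h2 := (φ (g u)).2
    have h3 := (φ v).2; have h4 := (φ (g v)).2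
    have : n < m + 1 := by
      have : (n : ℝ) < m + 1 := by linarith [h1.1, h3.2]
      exact_mod_cast this
    rcases (show n ≤ m by omega).eq_or_lt with rfl | hlt
    · have h5 : φ u < φ v := by
        rw [← Subtype.coe_lt_coe]; linarith
      have h6 : φ (g u) < φ (g v) := by
        rw [OrderIso.lt_iff_lt, OrderIso.lt_iff_lt]; exact φ.lt_iff_lt.1 h5
      have h7 : (φ (g u) : ℝ) < φ (g v) := h6
      linarith
    · have : (n : ℝ) + 1 ≤ m := by exact_mod_cast (by omega : n + 1 ≤ m)
      linarith [h2.2, h4.1]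

/-- The extension as an order isomorphism. -/
noncomputable def extIso (φ : ℝ ≃o Set.Ioo (0:ℝ) 1) (g : ℝ ≃o ℝ) : ℝ ≃o ℝ where
  toFun := ext1 φ g
  invFun := ext1 φ g.symm
  left_inv := ext1_inv φ g
  right_inv := fun x => by simpa using ext1_inv φ g.symm x
  map_rel_iff' := (ext1_mono φ g).le_iff_le

/-- The extended rank. -/
noncomputable def rankExt (φ : ℝ ≃o Set.Ioo (0:ℝ) 1) (r : ℝ → ℕ) (x : ℝ) : ℕ :=
  if h : 0 < Int.fract x then r (φ.symm ⟨Int.fract x, h, Int.fract_lt_one x⟩) + 1 else 0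

theorem rankExt_int (φ : ℝ ≃o Set.Ioo (0:ℝ) 1) (r : ℝ → ℕ) (n : ℤ) : rankExt φ r n = 0 := by
  simp [rankExt]

theorem rankExt_add (φ : ℝ ≃o Set.Ioo (0:ℝ) 1) (r : ℝ → ℕ) (n : ℤ) (u : ℝ) :
    rankExt φ r (n + φ u) = r u + 1 := by
  have h : 0 < Int.fract ((n : ℝ) + φ u) := by rw [fract_aux]; exact (φ u).2.1
  have h2 : (⟨Int.fract ((n : ℝ) + φ u), h, Int.fract_lt_one _⟩ : Set.Ioo (0:ℝ) 1) = φ u :=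
    Subtype.ext (fract_aux n _)
  rw [rankExt, dif_pos h, h2, OrderIso.symm_apply_apply]

theorem rankExt_closed (φ : ℝ ≃o Set.Ioo (0:ℝ) 1) (r : ℝ → ℕ)
    (hr : ∀ i, IsClosed {x | r x ≤ i}) (i : ℕ) : IsClosed {x | rankExt φ r x ≤ i} := by
  -- the complement is a union of images of open sets under open embeddings
  have hU : IsOpen {u | i < r u + 1} := by
    rcases i with _ | i
    · simp
    · have := (hr i).isOpen_compl
      convert this using 1
      ext u; simp
  have hemb : ∀ n : ℤ, IsOpenMap (fun u : ℝ => (n : ℝ) + φ u) := by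
    intro n
    have h1 : IsOpenMap (fun u : ℝ => (φ u : ℝ)) :=
      (isOpen_Ioo.isOpenMap_subtype_val).comp φ.toHomeomorph.isOpenMap
    exact (Homeomorph.addLeft (n : ℝ)).isOpenMap.comp h1
  rw [← isOpen_compl_iff]
  have : {x | rankExt φ r x ≤ i}ᶜ = ⋃ n : ℤ, (fun u : ℝ => (n : ℝ) + φ u) '' {u | i < r u + 1} := by
    ext x
    simp only [Set.mem_compl_iff, Set.mem_setOf_eq, not_le, Set.mem_iUnion, Set.mem_image]
    constructor
    · intro hx
      rcases real_cases φ x with ⟨n, rfl⟩ | ⟨n, u, rfl⟩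
      · rw [rankExt_int] at hx; omega
      · rw [rankExt_add] at hx
        exact ⟨n, u, hx, rfl⟩
    · rintro ⟨n, u, hu, rfl⟩
      rwa [rankExt_add]
  rw [this]
  exact isOpen_iUnion fun n => hemb n _ hU

theorem good_succ {k : ℕ} (h : Good k) : Good (k + 1) := by
  obtain ⟨φ⟩ := exists_orderIso
  obtain ⟨r, hle, hsurj, hcl, -, htr⟩ := h
  have per : ∀ (n : ℤ) x, rankExt φ r (x + n) = rankExt φ r x := by
    intro m x
    rcases real_cases φ x with ⟨n, rfl⟩ | ⟨n, u, rfl⟩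
    · rw [show (n : ℝ) + m = ((n + m : ℤ) : ℝ) by push_cast; ring, rankExt_int, rankExt_int]
    · rw [show (n : ℝ) + φ u + m = ((n + m : ℤ) : ℝ) + φ u by push_cast; ring,
        rankExt_add, rankExt_add]
  refine ⟨rankExt φ r, ?_, ?_, rankExt_closed φ r hcl, ?_, ?_⟩
  · intro x
    rcases real_cases φ x with ⟨n, rfl⟩ | ⟨n, u, rfl⟩
    · rw [rankExt_int]; omega
    · rw [rankExt_add]; have := hle u; omega
  · intro i hi
    rcases i with _ | i
    · exact ⟨(0 : ℤ), rankExt_int φ r 0⟩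
    · obtain ⟨u, hu⟩ := hsurj i (by omega)
      exact ⟨(0 : ℤ) + φ u, by rw [rankExt_add, hu]⟩
  · intro x; simpa using per 1 x
  · have shift : ∀ m : ℤ, ∀ z, (OrderIso.addRight (m : ℝ)) (z + 1) = OrderIso.addRight (m : ℝ) z + 1 := by
      intro m z; simp; ring
    intro x y hxy
    rcases real_cases φ x with ⟨n, rfl⟩ | ⟨n, u, rfl⟩ <;>
    rcases real_cases φ y with ⟨m, rfl⟩ | ⟨m, v, rfl⟩
    · refine ⟨OrderIso.addRight ((m - n : ℤ) : ℝ), shift _, fun z => per _ z, ?_⟩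
      simp
    · rw [rankExt_int, rankExt_add] at hxy; omega
    · rw [rankExt_int, rankExt_add] at hxy; omega
    · rw [rankExt_add, rankExt_add] at hxy
      obtain ⟨g, -, hgr, hg⟩ := htr u v (by omega)
      refine ⟨(extIso φ g).trans (OrderIso.addRight ((m - n : ℤ) : ℝ)), ?_, ?_, ?_⟩
      · intro z
        show ext1 φ g (z + 1) + _ = ext1 φ g z + _ + 1
        have : ext1 φ g (z + 1) = ext1 φ g z + 1 := by
          rcases real_cases φ z with ⟨n, rfl⟩ | ⟨n, u, rfl⟩
          · rw [show (n : ℝ) + 1 = ((n + 1 : ℤ) : ℝ) by push_cast; ring, ext1_int, ext1_int]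
            push_cast; ring
          · rw [show (n : ℝ) + φ u + 1 = ((n + 1 : ℤ) : ℝ) + φ u by push_cast; ring,
              ext1_add, ext1_add]
            push_cast; ring
        rw [this]; ring
      · intro z
        show rankExt φ r (ext1 φ g z + ((m - n : ℤ) : ℝ)) = _
        rw [per]
        rcases real_cases φ z with ⟨n, rfl⟩ | ⟨n, u, rfl⟩
        · rw [ext1_int]
        · rw [ext1_add, rankExt_add, rankExt_add, hgr]
      · show ext1 φ g (n + φ u) + ((m - n : ℤ) : ℝ) = _
        rw [ext1_add, hg]; push_cast; ring

theorem good_all (k : ℕ) : Good k := by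
  induction k with
  | zero => exact good_zero
  | succ k ih => exact good_succ ih

theorem exists_quotient : ∃ q : ℝ → Circle, IsQuotientMap q ∧
    ∀ x y, q x = q y ↔ ∃ n : ℤ, y = x + n := by
  refine ⟨(AddCircle.homeomorphCircle (one_ne_zero (α := ℝ))) ∘ (fun x : ℝ => (x : AddCircle (1:ℝ))),
    ?_, ?_⟩
  · exact (Homeomorph.isQuotientMap _).comp isQuotientMap_quotient_mk'
  · intro x y
    simp only [Function.comp_apply, EmbeddingLike.apply_eq_iff_eq]
    rw [QuotientAddGroup.eq, AddSubgroup.mem_zmultiples_iff]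
    constructor
    · rintro ⟨n, hn⟩
      refine ⟨n, ?_⟩
      simp only [zsmul_eq_mul, mul_one] at hn
      linarith
    · rintro ⟨n, rfl⟩
      exact ⟨n, by simp⟩

theorem circle_height (k : ℕ) : ∃ H : Subgroup (Circle ≃ₜ Circle), height H = (k : ℕ∞) := by
  obtain ⟨r, hle, hsurj, hcl, hper, htr⟩ := good_all k
  obtain ⟨q, hq, hqe⟩ := exists_quotient
  have hperZ : ∀ (n : ℤ) x, r (x + n) = r x := by
    intro n x
    have : Function.Periodic r 1 := hper
    simpa using this.int_mul n x
  let s := Function.surjInv hq.surjective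
  have hs : ∀ c, q (s c) = c := Function.surjInv_eq hq.surjective
  let R : Circle → ℕ := fun c => r (s c)
  have hR : ∀ x, R (q x) = r x := by
    intro x
    obtain ⟨n, hn⟩ := (hqe _ _).1 (hs (q x)).symm
    show r (s (q x)) = r x
    rw [hn, hperZ]
  have desc : ∀ g : ℝ ≃o ℝ, (∀ z, g (z + 1) = g z + 1) →
      ∃ f : Circle → Circle, Continuous f ∧ ∀ x, f (q x) = q (g x) := by
    intro g hg
    have hgZ : ∀ (n : ℤ) z, g (z + n) = g z + n := by
      intro n z
      have : Function.Periodic (fun z => g z - z) 1 := by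
        intro z; simp only [hg]; ring
      have h := this.int_mul n z
      simp only [mul_one] at h
      linarith
    have hf : ∀ x, q (g (s (q x))) = q (g x) := by
      intro x
      obtain ⟨n, hn⟩ := (hqe _ _).1 (hs (q x)).symm
      rw [hn, hgZ]
      exact ((hqe _ _).2 ⟨n, rfl⟩).symm
    refine ⟨fun c => q (g (s c)), ?_, hf⟩
    rw [hq.continuous_iff]
    have : (fun c => q (g (s c))) ∘ q = q ∘ g := funext hf
    rw [this]
    exact hq.continuous.comp g.continuous
  let H : Subgroup (Circle ≃ₜ Circle) :=
    { carrier := {f | ∀ c, R (f c) = R c}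
      mul_mem' := fun {a b} ha hb c => (ha (b c)).trans (hb c)
      one_mem' := fun c => rfl
      inv_mem' := fun {a} ha c => by
        have := ha (a.symm c)
        rw [a.apply_symm_apply] at this
        exact this.symm }
  refine ⟨H, height_eq_of_rank H k R (fun c => hle _) ?_ ?_ (fun g hg => hg) ?_⟩
  · intro i hi
    obtain ⟨x, hx⟩ := hsurj i hi
    exact ⟨q x, by rw [hR, hx]⟩
  · intro i
    rw [← hq.isClosed_preimage]
    convert hcl i using 1
    ext x; simp [hR]
  · intro c d hcd
    obtain ⟨g, hg, hgr, hgx⟩ := htr (s c) (s d) hcd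
    have hg' : ∀ z, g.symm (z + 1) = g.symm z + 1 := by
      intro z
      rw [OrderIso.symm_apply_eq, hg, OrderIso.apply_symm_apply]
    obtain ⟨f, hfc, hf⟩ := desc g hg
    obtain ⟨f', hfc', hf'⟩ := desc g.symm hg'
    refine ⟨⟨⟨f, f', ?_, ?_⟩, hfc, hfc'⟩, ?_, ?_⟩
    · intro c; rw [← hs c, hf, hf', OrderIso.symm_apply_apply]
    · intro c; rw [← hs c, hf', hf, OrderIso.apply_symm_apply]
    · intro c
      show R (f c) = R c
      rw [← hs c, hf, hR, hR, hgr]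
    · show f c = d
      rw [← hs c, hf, hgx, hs]

/-- Every value in `{0, 1, 2, …} ∪ {+∞}` is the height of some transformation group on
the circle: `P_h(S¹) = ℕ∞`. -/
theorem PH_circle :
    (∀ n : ℕ, ∃ H : Subgroup (Circle ≃ₜ Circle), height H = (n : ℕ∞)) ∧
    (∃ H : Subgroup (Circle ≃ₜ Circle), height H = ⊤) ∧
    PH Circle = Set.univ := by
  have htop : ∃ H : Subgroup (Circle ≃ₜ Circle), height H = ⊤ := by
    have : Infinite (Set.Ioc (-Real.pi) Real.pi) :=
      (Set.Ioc_infinite (by linarith [Real.pi_pos])).to_subtype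
    have : Infinite Circle := Circle.argEquiv.infinite_iff.2 this
    exact ⟨⊥, height_bot_eq_top⟩
  refine ⟨circle_height, htop, ?_⟩
  ext m
  simp only [Set.mem_univ, iff_true]
  induction m using ENat.recTopCoe with
  | top => exact htop
  | coe n => exact circle_height n
end
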